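/- Assume 0 < η_i < 2μ/‖A‖² for i = 1, …, p, that for every n ≥ 0 the iterate x_n^δ is a minimizer of x ↦ R(x) − ⟨ξ_n^δ, x⟩ over X, and that the source condition holds: there exists λ† = (λ_1†, …, λ_p†) ∈ Y such that R(x) ≥ R(x†) + ⟨A^* λ†, x − x†⟩ for all x ∈ X, where x† is the R-minimizing solution of the system A_i x = y_i (i = 1, …, p). Then there exists a positive constant C depending only on μ, ‖A‖² and the η_i such that for all integers n ≥ 0, E[‖x_n^δ − x†‖²] ≤ C (p M₀/(n+1) + (n+1) δ²/p + δ²), where M₀ := Σ_{i=1}^p (1/η_i) ‖λ_i†‖². Consequently, if n_δ is chosen such that (n_δ + 1)/p ~ δ^{−1}, then E[‖x_{n_δ}^δ − x†‖²] = O(δ). -/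

import Mathlib

open scoped RealInnerProductSpace

/-- Expectation with respect to the first `m` i.i.d. uniformly distributed indices:
for a quantity `f` determined by the coordinates `i_0, …, i_{m-1}` of the sample path,
`avg p hp m f = p^{-m} ∑_{(i_0,…,i_{m-1}) ∈ {1,…,p}^m} f`. -/
noncomputable def avg (p : ℕ) (hp : 0 < p) (m : ℕ) (f : (ℕ → Fin p) → ℝ) : ℝ :=
  (∑ σ : Fin m → Fin p, f (fun k => if h : k < m then σ ⟨k, h⟩ else ⟨0, hp⟩)) / (p : ℝ) ^ m

/-- The operator `A : X → Y₁ × ⋯ × Y_p`, `A x = (A₁ x, …, A_p x)`, where the product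
carries the (Hilbertian) `ℓ²`-product norm; `‖fullOp A‖` is the operator norm `‖A‖`. -/
noncomputable def fullOp {p : ℕ} {X : Type} [NormedAddCommGroup X] [NormedSpace ℝ X]
    {Y : Fin p → Type} [∀ i, NormedAddCommGroup (Y i)] [∀ i, NormedSpace ℝ (Y i)]
    (A : ∀ i, X →L[ℝ] Y i) : X →L[ℝ] PiLp 2 Y :=
  (((PiLp.continuousLinearEquiv 2 ℝ fun i => Y i).symm :
      (∀ i, Y i) ≃L[ℝ] PiLp 2 Y) : (∀ i, Y i) →L[ℝ] PiLp 2 Y).comp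
    (ContinuousLinearMap.pi A)

/-- The adjoint `A_i^* : Y_i → X^*` of `A_i : X → Y_i` for a Banach space `X` and a
Hilbert space `Y_i`: `(A_i^* v) x = ⟪v, A_i x⟫`. -/
noncomputable def banachAdjoint {X : Type} [NormedAddCommGroup X] [NormedSpace ℝ X]
    {Yi : Type} [NormedAddCommGroup Yi] [InnerProductSpace ℝ Yi]
    (Ai : X →L[ℝ] Yi) (v : Yi) : X →L[ℝ] ℝ :=
  (innerSL ℝ v).comp Ai

/-!
The extrapolated functional `(n + 1) ξ_n - n ξ_{n-1}` equals `A^* z_n`, where `z_n` performs plain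
stochastic block gradient steps in the product space with the norm weighted by `1 / η i`.
Comparing the Bregman distances of consecutive iterates with the source condition shows that the
energy `‖z_n - λ†‖² + (2 / p) n D_{ξ_{n-1}}(x†, x_{n-1})` does not grow in expectation, up to
noise; Young's inequality absorbs the noise at the price of a growth factor `1 + θ / p`.
Gronwall's inequality with `θ` of order `p / n` bounds the energy, which controls
`(2 / p) n μ ‖x_{n-1} - x†‖²` by strong convexity.
-/

section Averaging

variable {p : ℕ} (hp : 0 < p) (m : ℕ)

lemma avg_succ (f : (ℕ → Fin p) → ℝ) :
    avg p hp (m + 1) f = avg p hp m fun ω => (∑ i, f (Function.update ω m i)) / p := by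
  unfold avg
  rw [← Finset.sum_div, div_div, ← pow_succ']
  congr 1
  rw [← (Fin.snocEquiv fun _ : Fin (m + 1) => Fin p).sum_comp, Fintype.sum_prod_type_right]
  refine Finset.sum_congr rfl fun σ _ => Finset.sum_congr rfl fun i _ => ?_
  congr 1
  funext k
  rcases lt_trichotomy k m with hk | rfl | hk
  · simp [hk.ne, hk, hk.trans m.lt_succ_self, Fin.snocEquiv, Fin.snoc]
  · simp [Fin.snocEquiv, Fin.snoc]
  · simp [hk.ne', hk.not_gt, Nat.not_lt.2 hk]

lemma avg_mono {f g : (ℕ → Fin p) → ℝ} (h : ∀ ω, f ω ≤ g ω) :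
    avg p hp m f ≤ avg p hp m g := by
  unfold avg
  gcongr
  exact h _

lemma avg_const_mul (c : ℝ) (f : (ℕ → Fin p) → ℝ) :
    avg p hp m (fun ω => c * f ω) = c * avg p hp m f := by
  simp only [avg, ← Finset.mul_sum, mul_div_assoc]

lemma avg_add_const (f : (ℕ → Fin p) → ℝ) (c : ℝ) :
    avg p hp m (fun ω => f ω + c) = avg p hp m f + c := by
  have hp₀ : (p : ℝ) ≠ 0 := Nat.cast_ne_zero.2 hp.ne'
  simp [avg, Finset.sum_add_distrib, add_div, hp₀]

lemma apply_update_of_dependsOn_Iio {ι β : Type*} {m : ℕ} {F : (ℕ → ι) → β}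
    (hF : DependsOn F (Set.Iio m)) (ω : ℕ → ι) (i : ι) : F (Function.update ω m i) = F ω :=
  hF fun _ hk => Function.update_of_ne (ne_of_lt hk) _ _

lemma avg_succ_of_dependsOn {f : (ℕ → Fin p) → ℝ} (hf : DependsOn f (Set.Iio m)) :
    avg p hp (m + 1) f = avg p hp m f := by
  have hp₀ : (p : ℝ) ≠ 0 := Nat.cast_ne_zero.2 hp.ne'
  simp [avg_succ, apply_update_of_dependsOn_Iio hf, hp₀]

end Averaging

section Bregman

variable {X : Type*} [NormedAddCommGroup X] [NormedSpace ℝ X] {f : X → ℝ} {s : Set X} {m : ℝ}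
  {ξ ξ' ζ : X →L[ℝ] ℝ} {x x' z : X}

/-- `ξ ∈ ∂f(x)`, where `f` is regarded as `+∞` outside `s`; equivalently, `x ∈ s` minimizes
`f - ξ` over `s`. -/
def IsSubgradientOn (f : X → ℝ) (s : Set X) (ξ : X →L[ℝ] ℝ) (x : X) : Prop :=
  x ∈ s ∧ ∀ z ∈ s, f x + ξ (z - x) ≤ f z

/-- The Bregman distance `D_ξ(z, x)` induced by `f`, meaningful when `ξ ∈ ∂f(x)`. -/
def bregman (f : X → ℝ) (ξ : X →L[ℝ] ℝ) (x z : X) : ℝ :=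
  f z - f x - ξ (z - x)

lemma IsSubgradientOn.bregman_nonneg (hx : IsSubgradientOn f s ξ x) (hz : z ∈ s) :
    0 ≤ bregman f ξ x z := by
  have := hx.2 z hz
  rw [bregman]
  linarith

lemma IsSubgradientOn.mul_norm_sq_le_bregman (hf : StrongConvexOn s m f)
    (hx : IsSubgradientOn f s ξ x) (hz : z ∈ s) :
    m / 2 * ‖z - x‖ ^ 2 ≤ bregman f ξ x z := by
  have hsegment : ∀ t ∈ Set.Ioc (0 : ℝ) 1,
      (1 - t) * (m / 2 * ‖z - x‖ ^ 2) ≤ bregman f ξ x z := by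
    rintro t ⟨ht₀, ht₁⟩
    have hconv := hf.2 hz hx.1 ht₀.le (sub_nonneg.2 ht₁) (add_sub_cancel t 1)
    have hsub := hx.2 _ (hf.1 hz hx.1 ht₀.le (sub_nonneg.2 ht₁) (add_sub_cancel t 1))
    have hdir : t • z + (1 - t) • x - x = t • (z - x) := by module
    rw [hdir, map_smul] at hsub
    simp only [smul_eq_mul] at hconv hsub
    refine le_of_mul_le_mul_left ?_ ht₀
    rw [bregman]
    linarith
  have hlim : Filter.Tendsto (fun t : ℝ => (1 - t) * (m / 2 * ‖z - x‖ ^ 2))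
      (nhdsWithin 0 (Set.Ioi 0)) (nhds ((1 - 0) * (m / 2 * ‖z - x‖ ^ 2))) :=
    Continuous.tendsto (by fun_prop) 0 |>.mono_left nhdsWithin_le_nhds
  rw [sub_zero, one_mul] at hlim
  exact le_of_tendsto hlim (Filter.mem_of_superset (Ioc_mem_nhdsGT zero_lt_one) hsegment)

lemma IsSubgradientOn.eq_of_strongConvexOn (hf : StrongConvexOn s m f) (hm : 0 < m)
    (hx : IsSubgradientOn f s ξ x) (hx' : IsSubgradientOn f s ξ x') : x = x' := by
  have h := hx.mul_norm_sq_le_bregman hf hx'.1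
  have h' := hx'.bregman_nonneg hx.1
  have hsymm : bregman f ξ x x' = -bregman f ξ x' x := by simp only [bregman, map_sub]; ring
  have hnorm : m / 2 * ‖x' - x‖ ^ 2 = 0 := le_antisymm (by linarith) (by positivity)
  simpa [hm.ne', sub_eq_zero, eq_comm (a := x)] using hnorm

/-- The right side minus the first two terms on the left is `a * D_ξ'(x, x') + D_ζ(x, z)`. -/
lemma IsSubgradientOn.extrapolated_bregman_le (hf : StrongConvexOn s m f)
    (hx : IsSubgradientOn f s ξ x) (hx' : IsSubgradientOn f s ξ' x')
    (hz : IsSubgradientOn f s ζ z) {a : ℝ} (ha : 0 ≤ a) :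
    (a + 1) * bregman f ξ x z - a * bregman f ξ' x' z + m / 2 * ‖x - z‖ ^ 2
      ≤ (a + 1) * ξ (x - z) - a * ξ' (x - z) - ζ (x - z) := by
  have hprev := mul_nonneg ha (hx'.bregman_nonneg hx.1)
  have hsource := hz.mul_norm_sq_le_bregman hf hx.1
  simp only [bregman, map_sub] at hprev hsource ⊢
  linarith

end Bregman

section ExtendedReal

variable {X : Type*} [NormedAddCommGroup X] [NormedSpace ℝ X] {R : X → EReal} {μ : ℝ}
  {ξ : X →L[ℝ] ℝ} {x₀ : X}

/-- `μ`-strong convexity of an extended-real-valued function, without the factor `1 / 2` of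
`StrongConvexOn`. -/
def IsStronglyConvex (R : X → EReal) (μ : ℝ) : Prop :=
  ∀ xb x : X, R xb ≠ ⊤ → R x ≠ ⊤ → ∀ t : ℝ, 0 ≤ t → t ≤ 1 →
    R (t • xb + (1 - t) • x) + ((μ * t * (1 - t) * ‖xb - x‖ ^ 2 : ℝ) : EReal)
      ≤ (t : EReal) * R xb + ((1 - t : ℝ) : EReal) * R x

lemma IsStronglyConvex.strongConvexOn_toReal (hR : IsStronglyConvex R μ) (hbot : ∀ x, R x ≠ ⊥) :
    StrongConvexOn {x | R x ≠ ⊤} (2 * μ) fun x => (R x).toReal := by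
  have hsegment {u v : X} (hu : R u ≠ ⊤) (hv : R v ≠ ⊤) {a b : ℝ} (ha : 0 ≤ a) (hb : 0 ≤ b)
      (hab : a + b = 1) : R (a • u + b • v) + ((μ * a * b * ‖u - v‖ ^ 2 : ℝ) : EReal)
        ≤ ((a * (R u).toReal + b * (R v).toReal : ℝ) : EReal) := by
    obtain rfl : b = 1 - a := by linarith
    have h := hR u v hu hv a ha (by linarith)
    rw [← EReal.coe_toReal hu (hbot u), ← EReal.coe_toReal hv (hbot v)] at h
    exact_mod_cast h
  have hdom {u v : X} (hu : R u ≠ ⊤) (hv : R v ≠ ⊤) {a b : ℝ} (ha : 0 ≤ a) (hb : 0 ≤ b)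
      (hab : a + b = 1) : R (a • u + b • v) ≠ ⊤ := by
    intro htop
    have h := hsegment hu hv ha hb hab
    rw [htop, EReal.top_add_coe] at h
    exact EReal.coe_ne_top _ (top_le_iff.1 h)
  refine ⟨fun u hu v hv a b => hdom hu hv, fun u hu v hv a b ha hb hab => ?_⟩
  have h := hsegment hu hv ha hb hab
  rw [← EReal.coe_toReal (hdom hu hv ha hb hab) (hbot _)] at h
  norm_cast at h
  simp only [smul_eq_mul]
  linarith

lemma isSubgradientOn_toReal_of_add_le (hbot : ∀ x, R x ≠ ⊥) (h₀ : R x₀ ≠ ⊤)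
    (h : ∀ x, R x₀ + ((ξ (x - x₀) : ℝ) : EReal) ≤ R x) :
    IsSubgradientOn (fun x => (R x).toReal) {x | R x ≠ ⊤} ξ x₀ := by
  refine ⟨h₀, fun x hx => ?_⟩
  have hle := h x
  rw [← EReal.coe_toReal hx (hbot x), ← EReal.coe_toReal h₀ (hbot x₀)] at hle
  exact_mod_cast hle

lemma isSubgradientOn_toReal_of_forall_sub_le (hbot : ∀ x, R x ≠ ⊥) (hproper : ∃ x, R x ≠ ⊤)
    (hmin : ∀ x, R x₀ - ((ξ x₀ : ℝ) : EReal) ≤ R x - ((ξ x : ℝ) : EReal)) :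
    IsSubgradientOn (fun x => (R x).toReal) {x | R x ≠ ⊤} ξ x₀ := by
  have h₀ : R x₀ ≠ ⊤ := by
    intro htop
    obtain ⟨x, hx⟩ := hproper
    have h := hmin x
    rw [htop, ← EReal.coe_toReal hx (hbot x), EReal.top_sub_coe] at h
    exact EReal.coe_ne_top _ (top_le_iff.1 h)
  refine ⟨h₀, fun x hx => ?_⟩
  have hle := hmin x
  rw [← EReal.coe_toReal hx (hbot x), ← EReal.coe_toReal h₀ (hbot x₀)] at hle
  norm_cast at hle
  rw [map_sub]
  linarith

end ExtendedReal

section BlockStep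

variable {E : Type*} [NormedAddCommGroup E] [InnerProductSpace ℝ E]

lemma two_mul_inner_le_mul_norm_sq_add {c : ℝ} (hc : 0 < c) (u v : E) :
    2 * ⟪u, v⟫ ≤ c * ‖u‖ ^ 2 + c⁻¹ * ‖v‖ ^ 2 := by
  have h : 0 ≤ c⁻¹ * ‖c • u - v‖ ^ 2 := by positivity
  rw [norm_sub_sq_real, norm_smul, real_inner_smul_left, Real.norm_of_nonneg hc.le] at h
  field_simp at h ⊢
  linarith

lemma norm_add_sq_le_mul_norm_sq_add {c : ℝ} (hc : 0 < c) (u v : E) :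
    ‖u + v‖ ^ 2 ≤ (1 + c) * ‖u‖ ^ 2 + (1 + c⁻¹) * ‖v‖ ^ 2 := by
  rw [norm_add_sq_real]
  linarith [two_mul_inner_le_mul_norm_sq_add hc u v]

variable {ι : Type*} {m L θ : ℝ} {η : ι → ℝ}

/-- The factor by which a block step of size `η i` amplifies the squared data error, maximized
over the blocks; `m` is the modulus of strong convexity and `L` a bound for `‖A‖²`. -/
noncomputable def noiseFactor (m L : ℝ) (η : ι → ℝ) : ℝ :=
  ⨆ i, m * η i / (m - η i * L)

lemma le_noiseFactor [Finite ι] (m L : ℝ) (η : ι → ℝ) (i : ι) :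
    m * η i / (m - η i * L) ≤ noiseFactor m L η :=
  Finite.le_ciSup (fun i => m * η i / (m - η i * L)) i

lemma noiseFactor_nonneg (hm : 0 ≤ m) (hη : ∀ i, 0 ≤ η i) (hηL : ∀ i, η i * L ≤ m) :
    0 ≤ noiseFactor m L η :=
  Real.iSup_nonneg fun i => div_nonneg (mul_nonneg hm (hη i)) (sub_nonneg.2 (hηL i))

lemma noisy_block_step_le [Finite ι] (hL : 0 < L) (hθ : 0 < θ) {i : ι} (hη : 0 < η i)
    (hηL : η i * L < m) (v g e : E) :
    -(2 * ⟪v, g + e⟫) + η i * ‖g + e‖ ^ 2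
      ≤ θ * ((η i)⁻¹ * ‖v‖ ^ 2) - 2 * ⟪v, g⟫ + m / L * ‖g‖ ^ 2
        + (θ⁻¹ + 1) * noiseFactor m L η * ‖e‖ ^ 2 := by
  have hgap : 0 < m - η i * L := sub_pos.2 hηL
  have hcross : -(2 * ⟪v, e⟫) ≤ θ * ((η i)⁻¹ * ‖v‖ ^ 2) + θ⁻¹ * η i * ‖e‖ ^ 2 := by
    have h := two_mul_inner_le_mul_norm_sq_add (c := θ * (η i)⁻¹) (by positivity) (-v) e
    rw [inner_neg_left, norm_neg, mul_inv, inv_inv] at h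
    linarith
  have hsquare : η i * ‖g + e‖ ^ 2
      ≤ m / L * ‖g‖ ^ 2 + m * η i / (m - η i * L) * ‖e‖ ^ 2 := by
    calc η i * ‖g + e‖ ^ 2
        ≤ η i * ((1 + (m - η i * L) / (η i * L)) * ‖g‖ ^ 2
          + (1 + ((m - η i * L) / (η i * L))⁻¹) * ‖e‖ ^ 2) := by
          gcongr
          exact norm_add_sq_le_mul_norm_sq_add (by positivity) g e
      _ = m / L * ‖g‖ ^ 2 + m * η i / (m - η i * L) * ‖e‖ ^ 2 := by
          field_simp
          ring
  have hstep : η i ≤ noiseFactor m L η := by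
    refine le_trans ?_ (le_noiseFactor m L η i)
    rw [le_div_iff₀ hgap, mul_comm]
    gcongr
    exact sub_le_self _ (by positivity)
  have hcross' : θ⁻¹ * η i * ‖e‖ ^ 2 ≤ θ⁻¹ * noiseFactor m L η * ‖e‖ ^ 2 := by gcongr
  have hsquare' : m * η i / (m - η i * L) * ‖e‖ ^ 2 ≤ noiseFactor m L η * ‖e‖ ^ 2 := by
    gcongr
    exact le_noiseFactor m L η i
  rw [inner_add_right]
  linarith

variable [Fintype ι] {Y : ι → Type*} [∀ i, NormedAddCommGroup (Y i)]

/-- The squared norm on the product space that weights the `i`-th block by `1 / η i`, so that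
each block step is a gradient step for it. -/
noncomputable def weightedNormSq (η : ι → ℝ) (v : ∀ i, Y i) : ℝ :=
  ∑ i, (η i)⁻¹ * ‖v i‖ ^ 2

lemma weightedNormSq_nonneg (hη : ∀ i, 0 ≤ η i) (v : ∀ i, Y i) : 0 ≤ weightedNormSq η v :=
  Finset.sum_nonneg fun i _ => mul_nonneg (inv_nonneg.2 (hη i)) (sq_nonneg _)

lemma weightedNormSq_neg (η : ι → ℝ) (v : ∀ i, Y i) :
    weightedNormSq η (-v) = weightedNormSq η v := by
  simp [weightedNormSq]

variable [∀ i, InnerProductSpace ℝ (Y i)] [DecidableEq ι]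

lemma weightedNormSq_sub_single (v : ∀ i, Y i) {i : ι} (hη : η i ≠ 0) (r : Y i) :
    weightedNormSq η (v - Pi.single i (η i • r))
      = weightedNormSq η v - 2 * ⟪v i, r⟫ + η i * ‖r‖ ^ 2 := by
  suffices weightedNormSq η (v - Pi.single i (η i • r)) - weightedNormSq η v
      = -(2 * ⟪v i, r⟫) + η i * ‖r‖ ^ 2 by linarith
  rw [weightedNormSq, weightedNormSq, ← Finset.sum_sub_distrib, Fintype.sum_eq_single i]
  · rw [Pi.sub_apply, Pi.single_eq_same, norm_sub_sq_real, real_inner_smul_right, norm_smul,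
      mul_pow, Real.norm_eq_abs, sq_abs]
    field_simp
    ring
  · intro j hj
    rw [Pi.sub_apply, Pi.single_eq_of_ne hj, sub_zero, sub_self]

lemma sum_weightedNormSq_sub_single_le (hL : 0 < L) (hθ : 0 < θ) (hη : ∀ i, 0 < η i)
    (hηL : ∀ i, η i * L < m) (v g e : ∀ i, Y i) :
    ∑ i, weightedNormSq η (v - Pi.single i (η i • (g i + e i)))
      ≤ (Fintype.card ι + θ) * weightedNormSq η v - 2 * ∑ i, ⟪v i, g i⟫
        + m / L * ∑ i, ‖g i‖ ^ 2 + (θ⁻¹ + 1) * noiseFactor m L η * ∑ i, ‖e i‖ ^ 2 := by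
  calc ∑ i, weightedNormSq η (v - Pi.single i (η i • (g i + e i)))
      = ∑ i, (weightedNormSq η v
        + (-(2 * ⟪v i, g i + e i⟫) + η i * ‖g i + e i‖ ^ 2)) := by
        refine Finset.sum_congr rfl fun i _ => ?_
        rw [weightedNormSq_sub_single v (hη i).ne']
        ring
    _ ≤ ∑ i, (weightedNormSq η v + (θ * ((η i)⁻¹ * ‖v i‖ ^ 2) - 2 * ⟪v i, g i⟫
        + m / L * ‖g i‖ ^ 2 + (θ⁻¹ + 1) * noiseFactor m L η * ‖e i‖ ^ 2)) := by
        refine Finset.sum_le_sum fun i _ => add_le_add_right ?_ _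
        exact noisy_block_step_le hL hθ (hη i) (hηL i) (v i) (g i) (e i)
    _ = _ := by
        simp only [Finset.sum_add_distrib, Finset.sum_sub_distrib, ← Finset.mul_sum,
          Finset.sum_const, Finset.card_univ, nsmul_eq_mul]
        rw [← weightedNormSq]
        ring

end BlockStep

section HeavyBall

variable {ι : Type*} {X : Type*} [NormedAddCommGroup X] [NormedSpace ℝ X]
  {Y : ι → Type*} [∀ i, NormedAddCommGroup (Y i)] [∀ i, InnerProductSpace ℝ (Y i)]

/-- `A^* λ = ∑ i, A_i^* λ_i` as a functional on `X`. -/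
noncomputable def fullAdjoint [Fintype ι] (A : ∀ i, X →L[ℝ] Y i) (lam : ∀ i, Y i) :
    X →L[ℝ] ℝ :=
  ∑ i, (innerSL ℝ (lam i)).comp (A i)

@[simp]
lemma fullAdjoint_apply [Fintype ι] (A : ∀ i, X →L[ℝ] Y i) (lam : ∀ i, Y i) (v : X) :
    fullAdjoint A lam v = ∑ i, ⟪lam i, A i v⟫ := by
  simp [fullAdjoint]

lemma fullAdjoint_sub_single [Fintype ι] [DecidableEq ι] (A : ∀ i, X →L[ℝ] Y i)
    (lam : ∀ i, Y i) (i : ι) (r : Y i) (v : X) :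
    fullAdjoint A (lam - Pi.single i r) v = fullAdjoint A lam v - ⟪r, A i v⟫ := by
  have hsingle : ∑ j, ⟪(Pi.single i r : ∀ j, Y j) j, A j v⟫ = ⟪r, A i v⟫ := by
    rw [Fintype.sum_eq_single i fun j hj => by rw [Pi.single_eq_of_ne hj, inner_zero_left],
      Pi.single_eq_same]
  simp only [fullAdjoint_apply, Pi.sub_apply, inner_sub_left, Finset.sum_sub_distrib, hsingle]

/-- The dual stochastic heavy ball iteration along the index sequence `ω`, for a function `f`
with effective domain `s`. Truncated subtraction makes `ξ (n - 1)` equal to `ξ 0` for `n = 0`,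
which is the convention `ξ_{-1} = ξ_0`. -/
structure IsDualHeavyBall (f : X → ℝ) (s : Set X) (A : ∀ i, X →L[ℝ] Y i) (yδ : ∀ i, Y i)
    (η : ι → ℝ) (ω : ℕ → ι) (ξ : ℕ → X →L[ℝ] ℝ) (x : ℕ → X) : Prop where
  zero : ξ 0 = 0
  succ : ∀ n : ℕ, ξ (n + 1) = ξ n
    - (((n : ℝ) + 2)⁻¹ * η (ω n)) • (innerSL ℝ (A (ω n) (x n) - yδ (ω n))).comp (A (ω n))
    + ((n : ℝ) / ((n : ℝ) + 2)) • (ξ n - ξ (n - 1))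
  isSubgradientOn : ∀ n, IsSubgradientOn f s (ξ n) (x n)

/-- The dual variable in the product space whose image under `A^*` is the extrapolated
functional `(n + 1) ξ_n - n ξ_{n-1}`: it performs plain block gradient steps. -/
noncomputable def dualVariable [DecidableEq ι] (A : ∀ i, X →L[ℝ] Y i) (yδ : ∀ i, Y i)
    (η : ι → ℝ) (ω : ℕ → ι) (x : ℕ → X) : ℕ → ∀ i, Y i
  | 0 => 0
  | n + 1 => dualVariable A yδ η ω x n
      - Pi.single (ω n) (η (ω n) • (A (ω n) (x n) - yδ (ω n)))

variable {A : ∀ i, X →L[ℝ] Y i} {yδ : ∀ i, Y i} {η : ι → ℝ} {f : X → ℝ} {s : Set X} {m : ℝ}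

lemma IsDualHeavyBall.extrapolation_eq_fullAdjoint [Fintype ι] [DecidableEq ι] {ω : ℕ → ι}
    {ξ : ℕ → X →L[ℝ] ℝ} {x : ℕ → X} (h : IsDualHeavyBall f s A yδ η ω ξ x) (n : ℕ) (v : X) :
    ((n : ℝ) + 1) * ξ n v - n * ξ (n - 1) v = fullAdjoint A (dualVariable A yδ η ω x n) v := by
  induction n with
  | zero => simp [dualVariable, h.zero]
  | succ n ih =>
    rw [dualVariable, fullAdjoint_sub_single, ← ih, h.succ n, real_inner_smul_left]
    simp only [Nat.add_sub_cancel, Nat.cast_add_one, add_apply, sub_apply, smul_apply, smul_eq_mul,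
      ContinuousLinearMap.comp_apply, innerSL_apply_apply]
    field_simp
    ring

variable {ξ : (ℕ → ι) → ℕ → X →L[ℝ] ℝ} {x : (ℕ → ι) → ℕ → X}

section Adapted

variable (h : ∀ ω, IsDualHeavyBall f s A yδ η ω (ξ ω) (x ω)) (hf : StrongConvexOn s m f)
  (hm : 0 < m) (n : ℕ)

include h hf hm

lemma dependsOn_functional : DependsOn (fun ω => ξ ω n) (Set.Iio n) := by
  intro ω ω' hω
  induction n using Nat.strong_induction_on with
  | _ n ih =>
    match n with
    | 0 => simp only [(h _).zero]
    | n + 1 =>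
      have hcurrent : ξ ω n = ξ ω' n :=
        ih n n.lt_succ_self fun k hk => hω k (Nat.lt_succ_of_lt hk)
      have hprevious : ξ ω (n - 1) = ξ ω' (n - 1) :=
        ih (n - 1) (by omega) fun k hk => hω k (by simp only [Set.mem_Iio] at hk ⊢; omega)
      have hpoint : x ω n = x ω' n := by
        refine ((h ω).isSubgradientOn n).eq_of_strongConvexOn hf hm ?_
        exact hcurrent ▸ (h ω').isSubgradientOn n
      simp only [(h _).succ]
      rw [hcurrent, hprevious, hpoint, hω n n.lt_succ_self]

lemma dependsOn_iterate : DependsOn (fun ω => x ω n) (Set.Iio n) := by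
  intro ω ω' hω
  have hξ : ξ ω n = ξ ω' n := dependsOn_functional h hf hm n hω
  exact ((h ω).isSubgradientOn n).eq_of_strongConvexOn hf hm (hξ ▸ (h ω').isSubgradientOn n)

lemma dependsOn_dualVariable [DecidableEq ι] :
    DependsOn (fun ω => dualVariable A yδ η ω (x ω) n) (Set.Iio n) := by
  intro ω ω' hω
  induction n with
  | zero => rfl
  | succ n ih =>
    have hω' : ∀ k ∈ Set.Iio n, ω k = ω' k :=
      fun k hk => hω k (Nat.lt_succ_of_lt hk)
    have hz : dualVariable A yδ η ω (x ω) n = dualVariable A yδ η ω' (x ω') n := ih hω'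
    have hx : x ω n = x ω' n := dependsOn_iterate h hf hm n hω'
    simp only [dualVariable]
    rw [hz, hx, hω n n.lt_succ_self]

end Adapted

variable [Fintype ι] [DecidableEq ι]

/-- The Lyapunov function at time `n`: the squared weighted distance of the dual variable to the
source element, plus the Bregman distance of the previous iterate to the solution with a weight
growing linearly in `n`. -/
noncomputable def lyapunov (f : X → ℝ) (A : ∀ i, X →L[ℝ] Y i) (yδ : ∀ i, Y i) (η : ι → ℝ)
    (xdag : X) (lamdag : ∀ i, Y i) (ω : ℕ → ι) (ξ : ℕ → X →L[ℝ] ℝ) (x : ℕ → X) (n : ℕ) : ℝ :=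
  weightedNormSq η (dualVariable A yδ η ω x n - lamdag)
    + 2 / Fintype.card ι * (n * bregman f (ξ (n - 1)) (x (n - 1)) xdag)

variable {xdag : X} {lamdag : ∀ i, Y i}

lemma IsDualHeavyBall.mul_norm_sq_le_lyapunov_succ {ω : ℕ → ι} {ξ : ℕ → X →L[ℝ] ℝ} {x : ℕ → X}
    (h : IsDualHeavyBall f s A yδ η ω ξ x) (hf : StrongConvexOn s m f) (hη : ∀ i, 0 ≤ η i)
    (hdag : xdag ∈ s) (n : ℕ) :
    m * ((n : ℝ) + 1) / Fintype.card ι * ‖x n - xdag‖ ^ 2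
      ≤ lyapunov f A yδ η xdag lamdag ω ξ x (n + 1) := by
  have hW := weightedNormSq_nonneg hη (dualVariable A yδ η ω x (n + 1) - lamdag)
  have hD := (h.isSubgradientOn n).mul_norm_sq_le_bregman hf hdag
  calc m * ((n : ℝ) + 1) / Fintype.card ι * ‖x n - xdag‖ ^ 2
      = 2 / Fintype.card ι * (((n : ℝ) + 1) * (m / 2 * ‖xdag - x n‖ ^ 2)) := by
        rw [norm_sub_rev]
        ring
    _ ≤ 2 / Fintype.card ι * (((n : ℝ) + 1) * bregman f (ξ n) (x n) xdag) := by gcongr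
    _ ≤ lyapunov f A yδ η xdag lamdag ω ξ x (n + 1) := by
        rw [lyapunov, Nat.add_sub_cancel, Nat.cast_add_one]
        exact le_add_of_nonneg_left hW

lemma IsDualHeavyBall.bregman_add_norm_sq_le_sum_inner {ω : ℕ → ι} {ξ : ℕ → X →L[ℝ] ℝ}
    {x : ℕ → X} (h : IsDualHeavyBall f s A yδ η ω ξ x) (hf : StrongConvexOn s m f)
    (hsource : IsSubgradientOn f s (fullAdjoint A lamdag) xdag) (n : ℕ) :
    2 * (((n : ℝ) + 1) * bregman f (ξ n) (x n) xdag) + m * ‖x n - xdag‖ ^ 2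
      ≤ 2 * (n * bregman f (ξ (n - 1)) (x (n - 1)) xdag)
        + 2 * ∑ i, ⟪(dualVariable A yδ η ω x n - lamdag) i, A i (x n - xdag)⟫ := by
  have hbregman := (h.isSubgradientOn n).extrapolated_bregman_le hf
    (h.isSubgradientOn (n - 1)) hsource n.cast_nonneg
  rw [h.extrapolation_eq_fullAdjoint] at hbregman
  simp only [fullAdjoint_apply] at hbregman
  simp only [Pi.sub_apply, inner_sub_left, Finset.sum_sub_distrib]
  linarith

lemma lyapunov_update_succ (h : ∀ ω, IsDualHeavyBall f s A yδ η ω (ξ ω) (x ω))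
    (hf : StrongConvexOn s m f) (hm : 0 < m) (ω : ℕ → ι) (n : ℕ) (i : ι) :
    lyapunov f A yδ η xdag lamdag (Function.update ω n i) (ξ (Function.update ω n i))
        (x (Function.update ω n i)) (n + 1)
      = weightedNormSq η (dualVariable A yδ η ω (x ω) n - lamdag
          - Pi.single i (η i • (A i (x ω n - xdag) + (A i xdag - yδ i))))
        + 2 / Fintype.card ι * (((n : ℝ) + 1) * bregman f (ξ ω n) (x ω n) xdag) := by
  have hz := apply_update_of_dependsOn_Iio (dependsOn_dualVariable h hf hm n) ω i
  have hξ := apply_update_of_dependsOn_Iio (dependsOn_functional h hf hm n) ω i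
  have hx := apply_update_of_dependsOn_Iio (dependsOn_iterate h hf hm n) ω i
  have hres : A i (x ω n - xdag) + (A i xdag - yδ i) = A i (x ω n) - yδ i := by
    rw [map_sub, sub_add_sub_cancel]
  beta_reduce at hz hξ hx
  rw [lyapunov, dualVariable, hz, Nat.add_sub_cancel, hξ, hx, Function.update_self, hres,
    sub_right_comm, Nat.cast_add_one]

lemma sum_lyapunov_update_le [Nonempty ι] {L θ δ : ℝ}
    (h : ∀ ω, IsDualHeavyBall f s A yδ η ω (ξ ω) (x ω)) (hf : StrongConvexOn s m f) (hm : 0 < m)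
    (hL : 0 < L) (hA : ∀ v, ∑ i, ‖A i v‖ ^ 2 ≤ L * ‖v‖ ^ 2) (hθ : 0 < θ) (hη : ∀ i, 0 < η i)
    (hηL : ∀ i, η i * L < m) (hδ : ∑ i, ‖A i xdag - yδ i‖ ^ 2 ≤ δ ^ 2)
    (hsource : IsSubgradientOn f s (fullAdjoint A lamdag) xdag) (ω : ℕ → ι) (n : ℕ) :
    ∑ i, lyapunov f A yδ η xdag lamdag (Function.update ω n i) (ξ (Function.update ω n i))
        (x (Function.update ω n i)) (n + 1)
      ≤ (Fintype.card ι + θ) * lyapunov f A yδ η xdag lamdag ω (ξ ω) (x ω) n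
        + (θ⁻¹ + 1) * noiseFactor m L η * δ ^ 2 := by
  have hK : 0 ≤ noiseFactor m L η :=
    noiseFactor_nonneg hm.le (fun i => (hη i).le) fun i => (hηL i).le
  have hblocks := sum_weightedNormSq_sub_single_le hL hθ hη hηL
    (dualVariable A yδ η ω (x ω) n - lamdag) (fun i => A i (x ω n - xdag))
    (fun i => A i xdag - yδ i)
  have hdescent := (h ω).bregman_add_norm_sq_le_sum_inner hf hsource n
  have hop : m / L * ∑ i, ‖A i (x ω n - xdag)‖ ^ 2 ≤ m * ‖x ω n - xdag‖ ^ 2 := by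
    calc m / L * ∑ i, ‖A i (x ω n - xdag)‖ ^ 2
        ≤ m / L * (L * ‖x ω n - xdag‖ ^ 2) := by gcongr; exact hA _
      _ = m * ‖x ω n - xdag‖ ^ 2 := by field_simp
  have hnoise : (θ⁻¹ + 1) * noiseFactor m L η * ∑ i, ‖A i xdag - yδ i‖ ^ 2
      ≤ (θ⁻¹ + 1) * noiseFactor m L η * δ ^ 2 := by gcongr
  have hD : 0 ≤ bregman f (ξ ω (n - 1)) (x ω (n - 1)) xdag :=
    ((h ω).isSubgradientOn (n - 1)).bregman_nonneg hsource.1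
  have hweight : 0 ≤ θ * (2 / Fintype.card ι
      * (n * bregman f (ξ ω (n - 1)) (x ω (n - 1)) xdag)) := by positivity
  have hcancel (t : ℝ) : (Fintype.card ι : ℝ) * (2 / Fintype.card ι * t) = 2 * t := by
    field_simp
  simp only [lyapunov_update_succ h hf hm, Finset.sum_add_distrib, Finset.sum_const,
    Finset.card_univ, nsmul_eq_mul, hcancel]
  rw [lyapunov, mul_add, add_mul _ _ (2 / (Fintype.card ι : ℝ) * _), hcancel]
  linarith

end HeavyBall

section Rate

/-- The constant of the error estimate; the factor `exp 1` comes from Gronwall's inequality. -/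
noncomputable def rateConst {ι : Type*} (m L : ℝ) (η : ι → ℝ) : ℝ :=
  Real.exp 1 / m * max 1 (noiseFactor m L η)

lemma rateConst_pos {ι : Type*} {m : ℝ} (hm : 0 < m) (L : ℝ) (η : ι → ℝ) :
    0 < rateConst m L η := by
  unfold rateConst
  positivity

variable {p : ℕ} (hp : 0 < p) {X : Type*} [NormedAddCommGroup X] [NormedSpace ℝ X]
  {Y : Fin p → Type*} [∀ i, NormedAddCommGroup (Y i)] [∀ i, InnerProductSpace ℝ (Y i)]
  {A : ∀ i, X →L[ℝ] Y i} {f : X → ℝ} {s : Set X} {m L δ : ℝ} {yδ : ∀ i, Y i} {η : Fin p → ℝ}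
  {xdag : X} {lamdag : ∀ i, Y i} {ξ : (ℕ → Fin p) → ℕ → X →L[ℝ] ℝ} {x : (ℕ → Fin p) → ℕ → X}

lemma avg_lyapunov_succ_le {θ : ℝ} (h : ∀ ω, IsDualHeavyBall f s A yδ η ω (ξ ω) (x ω))
    (hf : StrongConvexOn s m f) (hm : 0 < m) (hL : 0 < L)
    (hA : ∀ v, ∑ i, ‖A i v‖ ^ 2 ≤ L * ‖v‖ ^ 2) (hθ : 0 < θ) (hη : ∀ i, 0 < η i)
    (hηL : ∀ i, η i * L < m) (hδ : ∑ i, ‖A i xdag - yδ i‖ ^ 2 ≤ δ ^ 2)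
    (hsource : IsSubgradientOn f s (fullAdjoint A lamdag) xdag) (n : ℕ) :
    avg p hp (n + 1) (fun ω => lyapunov f A yδ η xdag lamdag ω (ξ ω) (x ω) (n + 1))
      ≤ (1 + θ / p) * avg p hp n (fun ω => lyapunov f A yδ η xdag lamdag ω (ξ ω) (x ω) n)
        + (θ⁻¹ + 1) * noiseFactor m L η * δ ^ 2 / p := by
  have : Nonempty (Fin p) := ⟨⟨0, hp⟩⟩
  have hp₀ : (p : ℝ) ≠ 0 := Nat.cast_ne_zero.2 hp.ne'
  rw [avg_succ, ← avg_const_mul, ← avg_add_const]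
  refine avg_mono hp n fun ω => ?_
  have hsum := sum_lyapunov_update_le h hf hm hL hA hθ hη hηL hδ hsource ω n
  rw [Fintype.card_fin] at hsum
  calc _ ≤ ((p + θ) * lyapunov f A yδ η xdag lamdag ω (ξ ω) (x ω) n
        + (θ⁻¹ + 1) * noiseFactor m L η * δ ^ 2) / p := by gcongr
    _ = _ := by field_simp

/-- Gronwall is applied over `n + 1` steps, with `θ = p / (n + 1)` so that the growth factors
`1 + 1 / (n + 1)` multiply to at most `exp 1`. -/
lemma avg_lyapunov_le_exp_one_mul (h : ∀ ω, IsDualHeavyBall f s A yδ η ω (ξ ω) (x ω))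
    (hf : StrongConvexOn s m f) (hm : 0 < m) (hL : 0 < L)
    (hA : ∀ v, ∑ i, ‖A i v‖ ^ 2 ≤ L * ‖v‖ ^ 2) (hη : ∀ i, 0 < η i)
    (hηL : ∀ i, η i * L < m) (hδ : ∑ i, ‖A i xdag - yδ i‖ ^ 2 ≤ δ ^ 2)
    (hsource : IsSubgradientOn f s (fullAdjoint A lamdag) xdag) (n : ℕ) :
    avg p hp (n + 1) (fun ω => lyapunov f A yδ η xdag lamdag ω (ξ ω) (x ω) (n + 1))
      ≤ Real.exp 1 * (weightedNormSq η lamdag + ((n : ℝ) + 1)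
        * ((((n : ℝ) + 1) / p + 1) * noiseFactor m L η * δ ^ 2 / p)) := by
  have : (0 : ℝ) < p := Nat.cast_pos.2 hp
  have hK : 0 ≤ noiseFactor m L η :=
    noiseFactor_nonneg hm.le (fun i => (hη i).le) fun i => (hηL i).le
  have hinit : avg p hp 0 (fun ω => lyapunov f A yδ η xdag lamdag ω (ξ ω) (x ω) 0)
      = weightedNormSq η lamdag := by
    simp [avg, lyapunov, dualVariable, weightedNormSq_neg]
  have hstep := avg_lyapunov_succ_le hp (θ := p / ((n : ℝ) + 1)) h hf hm hL hA (by positivity)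
    hη hηL hδ hsource
  have hgrowth : (p : ℝ) / ((n : ℝ) + 1) / p = ((n : ℝ) + 1)⁻¹ := by field_simp
  simp only [hgrowth, inv_div] at hstep
  have hgronwall := discrete_gronwall (n₀ := 0)
    (u := fun k => avg p hp k fun ω => lyapunov f A yδ η xdag lamdag ω (ξ ω) (x ω) k)
    (hinit ▸ weightedNormSq_nonneg (fun i => (hη i).le) lamdag) (fun k _ => hstep k)
    (fun _ _ => by positivity) (fun _ _ => by positivity) (n + 1).zero_le
  have hexponent : ((n : ℝ) + 1) * ((n : ℝ) + 1)⁻¹ = 1 := mul_inv_cancel₀ (by positivity)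
  simpa only [hinit, Finset.sum_const, Nat.Ico_zero_eq_range, Finset.card_range, nsmul_eq_mul,
    Nat.cast_add_one, hexponent, mul_comm (Real.exp 1)] using hgronwall

theorem avg_norm_sq_sub_le (h : ∀ ω, IsDualHeavyBall f s A yδ η ω (ξ ω) (x ω))
    (hf : StrongConvexOn s m f) (hm : 0 < m) (hL : 0 < L)
    (hA : ∀ v, ∑ i, ‖A i v‖ ^ 2 ≤ L * ‖v‖ ^ 2) (hη : ∀ i, 0 < η i)
    (hηL : ∀ i, η i * L < m) (hδ : ∑ i, ‖A i xdag - yδ i‖ ^ 2 ≤ δ ^ 2)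
    (hsource : IsSubgradientOn f s (fullAdjoint A lamdag) xdag) (n : ℕ) :
    avg p hp n (fun ω => ‖x ω n - xdag‖ ^ 2)
      ≤ rateConst m L η * (p * weightedNormSq η lamdag / ((n : ℝ) + 1)
        + ((n : ℝ) + 1) * δ ^ 2 / p + δ ^ 2) := by
  have : (0 : ℝ) < p := Nat.cast_pos.2 hp
  have hM : 0 ≤ weightedNormSq η lamdag := weightedNormSq_nonneg (fun i => (hη i).le) lamdag
  have hdep : DependsOn (fun ω => ‖x ω n - xdag‖ ^ 2) (Set.Iio n) := fun ω ω' hω =>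
    congrArg (‖· - xdag‖ ^ 2) (dependsOn_iterate h hf hm n hω)
  have hlower : m * ((n : ℝ) + 1) / p * avg p hp n (fun ω => ‖x ω n - xdag‖ ^ 2)
      ≤ avg p hp (n + 1) fun ω => lyapunov f A yδ η xdag lamdag ω (ξ ω) (x ω) (n + 1) := by
    rw [← avg_succ_of_dependsOn hp n hdep, ← avg_const_mul]
    refine avg_mono hp (n + 1) fun ω => ?_
    simpa only [Fintype.card_fin] using
      (h ω).mul_norm_sq_le_lyapunov_succ hf (fun i => (hη i).le) hsource.1 n
  have hupper := avg_lyapunov_le_exp_one_mul hp h hf hm hL hA hη hηL hδ hsource n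
  calc avg p hp n (fun ω => ‖x ω n - xdag‖ ^ 2)
      = (m * ((n : ℝ) + 1) / p * avg p hp n (fun ω => ‖x ω n - xdag‖ ^ 2))
        / (m * ((n : ℝ) + 1) / p) := by field_simp
    _ ≤ Real.exp 1 * (weightedNormSq η lamdag + ((n : ℝ) + 1)
        * ((((n : ℝ) + 1) / p + 1) * noiseFactor m L η * δ ^ 2 / p))
        / (m * ((n : ℝ) + 1) / p) := by
        exact div_le_div_of_nonneg_right (hlower.trans hupper) (by positivity)
    _ = Real.exp 1 / m * (1 * (p * weightedNormSq η lamdag / ((n : ℝ) + 1))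
        + noiseFactor m L η * (((n : ℝ) + 1) * δ ^ 2 / p + δ ^ 2)) := by
        field_simp
    _ ≤ Real.exp 1 / m * (max 1 (noiseFactor m L η)
          * (p * weightedNormSq η lamdag / ((n : ℝ) + 1))
        + max 1 (noiseFactor m L η) * (((n : ℝ) + 1) * δ ^ 2 / p + δ ^ 2)) := by
        gcongr
        exacts [le_max_left _ _, le_max_right _ _]
    _ = _ := by
        rw [rateConst]
        ring

end Rate

lemma rate_le_of_stopping_index {p N M δ c₁ c₂ : ℝ} (hp : 0 < p) (hN : 1 ≤ N) (hM : 0 ≤ M)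
    (hδ : 0 < δ) (hc₁ : 0 < c₁) (hlower : c₁ * δ⁻¹ ≤ N / p) (hupper : N / p ≤ c₂ * δ⁻¹) :
    p * M / N + N * δ ^ 2 / p + δ ^ 2 ≤ (M / c₁ + c₂ + c₂ * p) * δ := by
  have hbias : p * M / N ≤ M / c₁ * δ := by
    calc p * M / N = M / (N / p) := by field_simp
      _ ≤ M / (c₁ * δ⁻¹) := by gcongr
      _ = M / c₁ * δ := by field_simp
  have hnoise : N * δ ^ 2 / p ≤ c₂ * δ := by
    calc N * δ ^ 2 / p = N / p * δ ^ 2 := by ring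
      _ ≤ c₂ * δ⁻¹ * δ ^ 2 := by gcongr
      _ = c₂ * δ := by field_simp
  have hresidual : δ ^ 2 ≤ c₂ * p * δ := by
    calc δ ^ 2 ≤ N * δ ^ 2 := le_mul_of_one_le_left (sq_nonneg δ) hN
      _ = N * δ ^ 2 / p * p := by field_simp
      _ ≤ c₂ * δ * p := by gcongr
      _ = c₂ * p * δ := by ring
  linarith

lemma sum_norm_sq_le_norm_fullOp_sq_mul {p : ℕ} {X : Type} [NormedAddCommGroup X]
    [NormedSpace ℝ X] {Y : Fin p → Type} [∀ i, NormedAddCommGroup (Y i)]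
    [∀ i, NormedSpace ℝ (Y i)] (A : ∀ i, X →L[ℝ] Y i) (v : X) :
    ∑ i, ‖A i v‖ ^ 2 ≤ ‖fullOp A‖ ^ 2 * ‖v‖ ^ 2 := by
  have hnorm : ‖fullOp A v‖ ^ 2 = ∑ i, ‖A i v‖ ^ 2 := PiLp.norm_sq_eq_of_L2 Y (fullOp A v)
  rw [← hnorm, ← mul_pow]
  gcongr
  exact (fullOp A).le_opNorm v

theorem stmt_17_general {p : ℕ} (hp : 0 < p) {X : Type*} [NormedAddCommGroup X]
    [NormedSpace ℝ X] {Y : Fin p → Type*} [∀ i, NormedAddCommGroup (Y i)]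
    [∀ i, InnerProductSpace ℝ (Y i)] {A : ∀ i, X →L[ℝ] Y i} {μ L δ : ℝ} {R : X → EReal}
    {yδ : ∀ i, Y i} {η : Fin p → ℝ} {xdag : X} {lamdag : ∀ i, Y i}
    {ξ : (ℕ → Fin p) → ℕ → X →L[ℝ] ℝ} {xδ : (ℕ → Fin p) → ℕ → X}
    (hμ : 0 < μ) (hbot : ∀ x, R x ≠ ⊥) (hconv : IsStronglyConvex R μ) (hdag : R xdag ≠ ⊤)
    (hA : ∀ v, ∑ i, ‖A i v‖ ^ 2 ≤ L * ‖v‖ ^ 2)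
    (hδ : ∑ i, ‖A i xdag - yδ i‖ ^ 2 ≤ δ ^ 2)
    (hη : ∀ i, 0 < η i ∧ η i < 2 * μ / L)
    (hsource : ∀ x, R xdag + ((fullAdjoint A lamdag (x - xdag) : ℝ) : EReal) ≤ R x)
    (hξ_zero : ∀ ω, ξ ω 0 = 0)
    (hξ_succ : ∀ ω, ∀ n : ℕ, ξ ω (n + 1) = ξ ω n
      - (((n : ℝ) + 2)⁻¹ * η (ω n)) •
          (innerSL ℝ (A (ω n) (xδ ω n) - yδ (ω n))).comp (A (ω n))
      + ((n : ℝ) / ((n : ℝ) + 2)) • (ξ ω n - ξ ω (n - 1)))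
    (hmin : ∀ ω, ∀ n : ℕ, ∀ x : X,
      R (xδ ω n) - ((ξ ω n (xδ ω n) : ℝ) : EReal) ≤ R x - ((ξ ω n x : ℝ) : EReal)) :
    (∀ n : ℕ, avg p hp n (fun ω => ‖xδ ω n - xdag‖ ^ 2)
      ≤ rateConst (2 * μ) L η * (p * weightedNormSq η lamdag / ((n : ℝ) + 1)
        + ((n : ℝ) + 1) * δ ^ 2 / p + δ ^ 2)) ∧
    ∀ (c₁ c₂ : ℝ) (nδ : ℕ), 0 < c₁ → 0 < δ →
      c₁ * δ⁻¹ ≤ ((nδ : ℝ) + 1) / p → ((nδ : ℝ) + 1) / p ≤ c₂ * δ⁻¹ →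
      avg p hp nδ (fun ω => ‖xδ ω nδ - xdag‖ ^ 2)
        ≤ rateConst (2 * μ) L η * (weightedNormSq η lamdag / c₁ + c₂ + c₂ * p) * δ := by
  have hL : 0 < L := by
    have hquot := (hη ⟨0, hp⟩).1.trans (hη ⟨0, hp⟩).2
    exact (div_pos_iff_of_pos_left (by positivity)).1 hquot
  have hball : ∀ ω, IsDualHeavyBall (fun x => (R x).toReal) {x | R x ≠ ⊤} A yδ η ω (ξ ω)
      (xδ ω) := fun ω =>
    ⟨hξ_zero ω, hξ_succ ω, fun n =>
      isSubgradientOn_toReal_of_forall_sub_le hbot ⟨xdag, hdag⟩ (hmin ω n)⟩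
  have hrate := avg_norm_sq_sub_le hp hball (hconv.strongConvexOn_toReal hbot) (by positivity) hL
    hA (fun i => (hη i).1) (fun i => (lt_div_iff₀ hL).1 (hη i).2) hδ
    (isSubgradientOn_toReal_of_add_le hbot hdag hsource)
  refine ⟨hrate, fun c₁ c₂ n hc₁ hδ₀ hlower hupper => (hrate n).trans ?_⟩
  rw [mul_assoc]
  gcongr
  · exact (rateConst_pos (by positivity) L η).le
  · exact rate_le_of_stopping_index (Nat.cast_pos.2 hp) (by simp)
      (weightedNormSq_nonneg (fun i => (hη i).1.le) lamdag) hδ₀ hc₁ hlower hupper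

/-- **Theorem (rate of convergence for the dual stochastic heavy-ball method in Banach
spaces).**  There is a constant `C = C (p, μ, ‖A‖², η) > 0` depending only on `μ`,
`‖A‖²` and the step sizes `η i` such that: for every instance (Banach space `X`,
Hilbert spaces `Y i`, operators `A i`, `R : X → (−∞,∞]` proper, lower semicontinuous
and `μ`-strongly convex, exact data `y` whose `R`-minimizing solution is `x†`, noisy
data `y^δ` of total level `δ`, steps `0 < η i < 2μ/‖A‖²`) satisfying the source
condition `∃ λ†, A^*λ† ∈ ∂R(x†)` and with dual stochastic heavy-ball iterates
`(ξ_n^δ, x_n^δ)` (each `x_n^δ` minimizing `x ↦ R x − ⟨ξ_n^δ, x⟩`), one has for all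
`n ≥ 0`, `E[‖x_n^δ − x†‖²] ≤ C (p M₀/(n+1) + (n+1) δ²/p + δ²)` with
`M₀ = ∑_i (1/η i) ‖λ† i‖²`.  Consequently there is a constant
`C' = C' (p, μ, ‖A‖², η, M₀, c₁, c₂)` such that whenever the stopping index satisfies
`c₁ δ⁻¹ ≤ (n_δ + 1)/p ≤ c₂ δ⁻¹` (with `0 < δ ≤ 1`, `0 < c₁ ≤ c₂`), one has
`E[‖x_{n_δ}^δ − x†‖²] ≤ C' δ`, i.e. `E[‖x_{n_δ}^δ − x†‖²] = O(δ)`. -/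
theorem stmt_17 :
    ∃ (C : (p : ℕ) → ℝ → ℝ → (Fin p → ℝ) → ℝ)
      (C' : (p : ℕ) → ℝ → ℝ → (Fin p → ℝ) → ℝ → ℝ → ℝ → ℝ),
      ∀ (p : ℕ) (hp : 0 < p)
        (X : Type) (_ : NormedAddCommGroup X), ∀ (_ : NormedSpace ℝ X)
        (Y : Fin p → Type) (_ : ∀ i, NormedAddCommGroup (Y i)),
        ∀ (_ : ∀ i, InnerProductSpace ℝ (Y i)) (_ : ∀ i, CompleteSpace (Y i))
        (A : ∀ i, X →L[ℝ] Y i) (μ : ℝ) (R : X → EReal)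
        (y yδ : ∀ i, Y i) (δi : Fin p → ℝ) (δ : ℝ)
        (η : Fin p → ℝ) (xdag : X) (lamdag : ∀ j, Y j) (M₀ : ℝ)
        (ξ : (ℕ → Fin p) → ℕ → X →L[ℝ] ℝ) (xδ : (ℕ → Fin p) → ℕ → X),
        0 < μ →
        -- `R` is proper
        (∀ x, R x ≠ ⊥) → (∃ x, R x ≠ ⊤) →
        -- `R` is lower semicontinuous
        LowerSemicontinuous R →
        -- `R` is `μ`-strongly convex
        (∀ xb x : X, R xb ≠ ⊤ → R x ≠ ⊤ → ∀ t : ℝ, 0 ≤ t → t ≤ 1 →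
          R (t • xb + (1 - t) • x) + ((μ * t * (1 - t) * ‖xb - x‖ ^ 2 : ℝ) : EReal)
            ≤ (t : EReal) * R xb + ((1 - t : ℝ) : EReal) * R x) →
        -- `x†` is the `R`-minimizing solution of the system `A_i x = y_i`
        (∀ i, (A i) xdag = y i) → R xdag ≠ ⊤ →
        (∀ x : X, (∀ i, (A i) x = y i) → R xdag ≤ R x) →
        -- noisy data with total noise level `δ`
        (∀ i, ‖yδ i - y i‖ ≤ δi i) →
        δ = Real.sqrt (∑ i, (δi i) ^ 2) →
        -- the step sizes satisfy `0 < η i < 2 μ / ‖A‖²`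
        (∀ i, 0 < η i ∧ η i < 2 * μ / ‖fullOp A‖ ^ 2) →
        -- source condition: `A^* λ† ∈ ∂R(x†)`
        (∀ x : X, R xdag + (((∑ i, banachAdjoint (A i) (lamdag i)) (x - xdag) : ℝ) : EReal)
          ≤ R x) →
        M₀ = ∑ i, (η i)⁻¹ * ‖lamdag i‖ ^ 2 →
        -- the dual stochastic heavy-ball iteration
        (∀ ω, ξ ω 0 = 0) →
        (∀ ω, ∀ n : ℕ, ξ ω (n + 1) = ξ ω n
          - (((n : ℝ) + 2)⁻¹ * η (ω n)) •
              banachAdjoint (A (ω n)) ((A (ω n)) (xδ ω n) - yδ (ω n))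
          + ((n : ℝ) / ((n : ℝ) + 2)) • (ξ ω n - ξ ω (n - 1))) →
        -- `x_n^δ` is a minimizer of `x ↦ R x − ⟨ξ_n^δ, x⟩`
        (∀ ω, ∀ n : ℕ, ∀ x : X,
          R (xδ ω n) - (((ξ ω n) (xδ ω n) : ℝ) : EReal) ≤ R x - (((ξ ω n) x : ℝ) : EReal)) →
        (0 < C p μ (‖fullOp A‖ ^ 2) η ∧
          ∀ n : ℕ,
            avg p hp n (fun ω => ‖xδ ω n - xdag‖ ^ 2)
              ≤ C p μ (‖fullOp A‖ ^ 2) η *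
                  (p * M₀ / ((n : ℝ) + 1) + ((n : ℝ) + 1) * δ ^ 2 / p + δ ^ 2)) ∧
        ∀ (c₁ c₂ : ℝ) (nδ : ℕ), 0 < c₁ → c₁ ≤ c₂ → 0 < δ → δ ≤ 1 →
          c₁ * δ⁻¹ ≤ ((nδ : ℝ) + 1) / p → ((nδ : ℝ) + 1) / p ≤ c₂ * δ⁻¹ →
          avg p hp nδ (fun ω => ‖xδ ω nδ - xdag‖ ^ 2)
            ≤ C' p μ (‖fullOp A‖ ^ 2) η M₀ c₁ c₂ * δ := by
  refine ⟨fun _ μ L η => rateConst (2 * μ) L η,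
    fun p μ L η M₀ c₁ c₂ => rateConst (2 * μ) L η * (M₀ / c₁ + c₂ + c₂ * p), ?_⟩
  rintro p hp X _ _ Y _ _ _ A μ R y yδ δi δ η xdag lamdag M₀ ξ xδ hμ hbot - - hconv hsol hdag -
    hnoise rfl hη hsource rfl hξ_zero hξ_succ hmin
  have hδ : ∑ i, ‖A i xdag - yδ i‖ ^ 2 ≤ √(∑ i, δi i ^ 2) ^ 2 := by
    rw [Real.sq_sqrt (by positivity)]
    gcongr with i
    rw [hsol i, norm_sub_rev]
    exact hnoise i
  obtain ⟨hrate, hstopping⟩ := stmt_17_general hp hμ hbot hconv hdag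
    (sum_norm_sq_le_norm_fullOp_sq_mul A) hδ hη hsource hξ_zero hξ_succ hmin
  exact ⟨⟨rateConst_pos (by positivity) _ η, hrate⟩,
    fun c₁ c₂ n hc₁ _ hδ₀ _ => hstopping c₁ c₂ n hc₁ hδ₀⟩
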